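/- Let q ≥ 1 and let Q be the quiver of type Ã_{q,q} with vertex set {0,1,…,2q−1} and arrows i→i−1 for 1 ≤ i ≤ q, i→i+1 for q ≤ i ≤ 2q−2, and (2q−1)→0 (for q = 1 this is the Kronecker quiver with two arrows 1→0). Then there exists an element Y of ℚ(x_0,…,x_{2q−1}) such that for every vertex i of Q and every j ≥ 0 one has (Y² − 2)·X^i_{j+q} = X^i_j + X^i_{j+2q}. -/

import Mathlib

/-- Arrow multiplicities of the quiver of type Ã_{q,q} on vertices `{0,…,2q−1}` with arrows
`i → i−1` for `1 ≤ i ≤ q`, `i → i+1` for `q ≤ i ≤ 2q−2` and `(2q−1) → 0` (for `q = 1`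
this is the Kronecker quiver with two arrows `1 → 0`). -/
def multAqq (q : ℕ) (s t : Fin (q+q)) : ℕ :=
  (if 1 ≤ s.val ∧ s.val ≤ q ∧ t.val + 1 = s.val then 1 else 0) +
  (if q ≤ s.val ∧ s.val ≤ q + q - 2 ∧ t.val = s.val + 1 then 1 else 0) +
  (if s.val = q + q - 1 ∧ t.val = 0 then 1 else 0)

/-!
Grade the vertices of the quiver by their distance `ℓ` to the source `q`, so that every arrow goes
from degree `d` to degree `d + 1`, and place `X^v_j` at time `2j + ℓ(v)`. The frieze relation then
involves only the two neighbours of `v` on the cycle, both at the intermediate time, whatever the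
directions of the arrows. With `t(a, b)` the entry of the vertex `q + b - a` at time `a + b`, the
frieze becomes an SL₂-tiling of the quadrant with `t(a + q, b) = t(a, b + q)`.

In an SL₂-tiling without zeros, consecutive columns satisfy a three-term recurrence with
coefficients independent of the row, so the `2 × 2` minors of adjacent rows are also independent of
the row. Combined with the periodicity this makes `(t(a, b) + t(a + 2q, b)) / t(a + q, b)` a
constant `Y`. Since `X^v_{j+q}` is `q` steps down the diagonal, hence `2q` steps along a row, the
recurrence `u₀ + u₂ = Y u₁` is applied with twice the step, which turns `Y` into `Y² - 2`.

Finally no `X^v_j` vanishes, because it is a quotient of polynomials that are positive at the point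
`(1, …, 1)`.
-/

section PositiveFractions

variable {R S K : Type*} [CommSemiring R] [Semiring S] [PartialOrder S] [Field K]
  [Algebra R K] {φ : R →+* S}

theorem algebraMap_ne_zero_of_map_pos [FaithfulSMul R K] {r : R} (hr : 0 < φ r) :
    algebraMap R K r ≠ 0 := by
  rw [Ne, FaithfulSMul.algebraMap_eq_zero_iff]
  rintro rfl
  simp at hr

variable [IsStrictOrderedRing S]

variable (K φ) in
/-- The fractions in `K` of elements of `R` with positive image under `φ`. For `φ` the evaluation of
polynomials at a point, these are rational functions with a positive value there; they form a
multiplicative submonoid that is also closed under addition and division. -/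
def positiveFractions : Submonoid K where
  carrier := {x | ∃ p r : R, 0 < φ p ∧ 0 < φ r ∧ x = algebraMap R K p / algebraMap R K r}
  one_mem' := ⟨1, 1, by simp, by simp, by simp⟩
  mul_mem' := by
    rintro _ _ ⟨p, r, hp, hr, rfl⟩ ⟨p', r', hp', hr', rfl⟩
    refine ⟨p * p', r * r', ?_, ?_, ?_⟩
    · simpa only [map_mul] using mul_pos hp hp'
    · simpa only [map_mul] using mul_pos hr hr'
    · simp only [map_mul, div_mul_div_comm]

theorem algebraMap_mem_positiveFractions {r : R} (hr : 0 < φ r) :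
    algebraMap R K r ∈ positiveFractions K φ :=
  ⟨r, 1, hr, by simp, by simp⟩

theorem div_mem_positiveFractions {x y : K} (hx : x ∈ positiveFractions K φ)
    (hy : y ∈ positiveFractions K φ) : x / y ∈ positiveFractions K φ := by
  obtain ⟨p, r, hp, hr, rfl⟩ := hy
  rw [div_eq_mul_inv, inv_div]
  exact mul_mem hx ⟨r, p, hr, hp, rfl⟩

variable [FaithfulSMul R K]

theorem ne_zero_of_mem_positiveFractions {x : K} (hx : x ∈ positiveFractions K φ) : x ≠ 0 := by
  obtain ⟨p, r, hp, hr, rfl⟩ := hx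
  exact div_ne_zero (algebraMap_ne_zero_of_map_pos hp) (algebraMap_ne_zero_of_map_pos hr)

theorem add_mem_positiveFractions {x y : K} (hx : x ∈ positiveFractions K φ)
    (hy : y ∈ positiveFractions K φ) : x + y ∈ positiveFractions K φ := by
  obtain ⟨p, r, hp, hr, rfl⟩ := hx
  obtain ⟨p', r', hp', hr', rfl⟩ := hy
  refine ⟨p * r' + r * p', r * r', ?_, ?_, ?_⟩
  · simpa only [map_add, map_mul] using add_pos (mul_pos hp hr') (mul_pos hr hp')
  · simpa only [map_mul] using mul_pos hr hr'
  · simp only [map_add, map_mul]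
    exact div_add_div _ _ (algebraMap_ne_zero_of_map_pos hr) (algebraMap_ne_zero_of_map_pos hr')

end PositiveFractions

section Frieze

variable {V : Type*} {m : V → V → ℕ} {ℓ : V → ℕ}

/-- `ℓ` is a grading of the quiver with arrow multiplicities `m`: every arrow raises the degree by
one. -/
def IsGrading (m : V → V → ℕ) (ℓ : V → ℕ) : Prop :=
  ∀ s d, m s d ≠ 0 → ℓ d = ℓ s + 1

theorem IsGrading.wellFounded (hℓ : IsGrading m ℓ) : WellFounded fun s v => m s v ≠ 0 :=
  Subrelation.wf (fun h => by simp [InvImage, hℓ _ _ h]) (InvImage.wf ℓ wellFounded_lt)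

/-- The entry of the frieze `X` at vertex `v` and time `n`, where `X v j` sits at time
`ℓ v + 2 * j`. Times that are not of this form carry a junk value. -/
def friezeAtTime {R : Type*} (ℓ : V → ℕ) (X : V → ℕ → R) (v : V) (n : ℕ) : R :=
  X v ((n - ℓ v) / 2)

theorem friezeAtTime_of_eq {R : Type*} (X : V → ℕ → R) {v : V} {n j : ℕ} (h : n = ℓ v + 2 * j) :
    friezeAtTime ℓ X v n = X v j := by
  rw [friezeAtTime, h]
  congr 1
  omega

variable [Fintype V]

/-- The frieze relations of the quiver on `V` with `m s d` arrows from `s` to `d`. -/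
def IsFrieze {R : Type*} [CommSemiring R] (m : V → V → ℕ) (X : V → ℕ → R) : Prop :=
  ∀ v j, X v (j + 1) * X v j = 1 + (∏ s, X s (j + 1) ^ m s v) * ∏ d, X d j ^ m v d

theorem IsFrieze.mem_positiveFractions {R S K : Type*} [CommSemiring R] [Semiring S]
    [PartialOrder S] [IsStrictOrderedRing S] [Field K] [Algebra R K] [FaithfulSMul R K]
    {φ : R →+* S} {X : V → ℕ → K} (hX : IsFrieze m X)
    (hm : WellFounded fun s v => m s v ≠ 0) (h0 : ∀ v, X v 0 ∈ positiveFractions K φ)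
    (v : V) (j : ℕ) : X v j ∈ positiveFractions K φ := by
  induction j generalizing v with
  | zero => exact h0 v
  | succ j ih =>
    induction v using hm.induction with
    | _ v ihv =>
      rw [eq_div_of_mul_eq (ne_zero_of_mem_positiveFractions (ih v)) (hX v j)]
      refine div_mem_positiveFractions (add_mem_positiveFractions (one_mem _) (mul_mem
        (prod_mem fun s _ => ?_) (prod_mem fun d _ => pow_mem (ih d) _))) (ih v)
      by_cases hs : m s v = 0
      · simp only [hs, pow_zero, one_mem]
      · exact pow_mem (ihv s hs) _

theorem IsFrieze.ne_zero_of_initial_eq_X {A K : Type*} [CommSemiring A] [PartialOrder A]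
    [IsStrictOrderedRing A] [Field K] [Algebra (MvPolynomial V A) K]
    [FaithfulSMul (MvPolynomial V A) K] {X : V → ℕ → K} (hX : IsFrieze m X)
    (hm : WellFounded fun s v => m s v ≠ 0)
    (h0 : ∀ v, X v 0 = algebraMap (MvPolynomial V A) K (MvPolynomial.X v)) (v : V) (j : ℕ) :
    X v j ≠ 0 := by
  refine ne_zero_of_mem_positiveFractions
    (hX.mem_positiveFractions (φ := MvPolynomial.eval fun _ : V => (1 : A)) hm (fun w => ?_) v j)
  rw [h0]
  exact algebraMap_mem_positiveFractions (by simp)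

theorem IsFrieze.friezeAtTime_mul {R : Type*} [CommSemiring R] {X : V → ℕ → R} (hX : IsFrieze m X)
    (hℓ : IsGrading m ℓ) {v : V} {n j : ℕ} (hn : n = ℓ v + 2 * j) :
    friezeAtTime ℓ X v n * friezeAtTime ℓ X v (n + 2) =
      1 + ∏ w, friezeAtTime ℓ X w (n + 1) ^ (m w v + m v w) := by
  have neighbour (w : V) : friezeAtTime ℓ X w (n + 1) ^ (m w v + m v w) =
      X w (j + 1) ^ m w v * X w j ^ m v w := by
    rw [pow_add]
    congr 1
    · by_cases h : m w v = 0
      · simp only [h, pow_zero]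
      · have := hℓ _ _ h
        rw [friezeAtTime_of_eq (j := j + 1) X (by omega)]
    · by_cases h : m v w = 0
      · simp only [h, pow_zero]
      · have := hℓ _ _ h
        rw [friezeAtTime_of_eq (j := j) X (by omega)]
  rw [friezeAtTime_of_eq X hn, friezeAtTime_of_eq (j := j + 1) X (by omega), mul_comm, hX]
  simp only [neighbour, Finset.prod_mul_distrib]

end Frieze

section Tiling

/-- The array `t` on the quadrant `ℕ × ℕ` is an SL₂-tiling: all of its adjacent `2 × 2` minors equal
one. -/
def IsSL2Tiling {R : Type*} [CommSemiring R] (t : ℕ → ℕ → R) : Prop :=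
  ∀ a b, t a b * t (a + 1) (b + 1) = 1 + t (a + 1) b * t a (b + 1)

theorem eq_div_mul_of_cross_mul_eq {K : Type*} [Field K] {f g : ℕ → K} (hg : ∀ n, g n ≠ 0)
    (h : ∀ n, f n * g (n + 1) = f (n + 1) * g n) (n : ℕ) : f n = f 0 / g 0 * g n := by
  have ratio : f n / g n = f 0 / g 0 := by
    induction n with
    | zero => rfl
    | succ n ih => rw [← ih, div_eq_div_iff (hg _) (hg _), h]
  rw [← ratio, div_mul_cancel₀ _ (hg n)]

namespace IsSL2Tiling

theorem transpose {R : Type*} [CommSemiring R] {t : ℕ → ℕ → R} (ht : IsSL2Tiling t) :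
    IsSL2Tiling fun b a => t a b :=
  fun b a => by rw [ht a b, mul_comm]

variable {K : Type*} [Field K] {t : ℕ → ℕ → K}

theorem exists_column_recurrence (ht : IsSL2Tiling t) (h0 : ∀ a b, t a b ≠ 0) (b : ℕ) :
    ∃ c, ∀ a, t a (b + 2) = c * t a (b + 1) - t a b := by
  refine ⟨(t 0 b + t 0 (b + 2)) / t 0 (b + 1), fun a => eq_sub_of_add_eq' ?_⟩
  exact eq_div_mul_of_cross_mul_eq (f := fun a => t a b + t a (b + 2)) (fun a => h0 a (b + 1))
    (fun a => by linear_combination ht a b - ht a (b + 1)) a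

theorem minor_eq_minor (ht : IsSL2Tiling t) (h0 : ∀ a b, t a b ≠ 0) (a a' b n : ℕ) :
    t a b * t (a + 1) (b + n) - t (a + 1) b * t a (b + n) =
      t a' b * t (a' + 1) (b + n) - t (a' + 1) b * t a' (b + n) := by
  induction n using Nat.twoStepInduction with
  | zero =>
    simp only [add_zero]
    ring
  | one => linear_combination ht a b - ht a' b
  | more n ih ih' =>
    obtain ⟨c, hc⟩ := ht.exists_column_recurrence h0 (b + n)
    simp only [← add_assoc] at ih' ⊢
    simp only [hc]
    linear_combination c * ih' - ih

theorem cross_mul_eq_of_periodic (ht : IsSL2Tiling t) (h0 : ∀ a b, t a b ≠ 0) {q : ℕ}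
    (hper : ∀ a b, t (a + q) b = t a (b + q)) (a b : ℕ) :
    (t a b + t (a + 2 * q) b) * t (a + 1 + q) b =
      (t (a + 1) b + t (a + 1 + 2 * q) b) * t (a + q) b := by
  have h := ht.minor_eq_minor h0 a (a + q) b q
  simp only [← hper, add_right_comm a q 1] at h
  rw [two_mul, ← add_assoc, ← add_assoc]
  linear_combination h

theorem exists_row_recurrence_of_periodic (ht : IsSL2Tiling t) (h0 : ∀ a b, t a b ≠ 0) {q : ℕ}
    (hper : ∀ a b, t (a + q) b = t a (b + q)) :
    ∃ Y, ∀ a b, t a b + t (a + 2 * q) b = Y * t (a + q) b := by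
  refine ⟨(t 0 0 + t (0 + 2 * q) 0) / t (0 + q) 0, fun a b => ?_⟩
  have down := eq_div_mul_of_cross_mul_eq (f := fun a => t a b + t (a + 2 * q) b)
    (fun a => h0 (a + q) b) (ht.cross_mul_eq_of_periodic h0 hper · b) a
  have across := eq_div_mul_of_cross_mul_eq (f := fun b => t 0 b + t 0 (b + 2 * q))
    (fun b => h0 0 (b + q))
    (ht.transpose.cross_mul_eq_of_periodic (fun b a => h0 a b) (fun b a => (hper a b).symm) · 0) b
  have hper₂ (a b : ℕ) : t a (b + 2 * q) = t (a + 2 * q) b := by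
    simp only [two_mul, ← add_assoc, hper]
  simp only [hper₂, ← hper] at across
  rw [down, across, mul_div_cancel_right₀ _ (h0 _ _)]

theorem exists_diagonal_recurrence_of_periodic (ht : IsSL2Tiling t) (h0 : ∀ a b, t a b ≠ 0) {q : ℕ}
    (hper : ∀ a b, t (a + q) b = t a (b + q)) :
    ∃ Y, ∀ a b, (Y ^ 2 - 2) * t (a + q) (b + q) = t a b + t (a + 2 * q) (b + 2 * q) := by
  obtain ⟨Y, hY⟩ := ht.exists_row_recurrence_of_periodic h0 hper
  refine ⟨Y, fun a b => ?_⟩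
  have r₀ := hY a b
  have r₁ := hY (a + q) b
  have r₂ := hY (a + q + q) b
  simp only [two_mul, ← add_assoc, ← hper] at r₀ r₁ r₂ ⊢
  linear_combination -r₀ - r₂ - Y * r₁

end IsSL2Tiling

end Tiling

section Aqq

open scoped Fin.CommRing

variable {q : ℕ}

theorem fin_val_add_one_eq_ite {n : ℕ} [NeZero n] (v : Fin n) :
    ((v + 1 : Fin n) : ℕ) = if (v : ℕ) + 1 = n then 0 else (v : ℕ) + 1 := by
  rw [Fin.val_add, Fin.val_one', Nat.add_mod_mod]
  split_ifs with h
  · rw [h, Nat.mod_self]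
  · exact Nat.mod_eq_of_lt (by omega)

/-- The distance from the vertex `v` to the source `q` in the quiver with multiplicities
`multAqq q`, as `|v - q|` written with truncated subtractions. -/
def sourceDist (v : Fin (q + q)) : ℕ :=
  (q - v) + (v - q)

theorem isGrading_sourceDist (q : ℕ) : IsGrading (multAqq q) sourceDist := by
  intro s d h
  have := s.isLt
  unfold multAqq at h
  unfold sourceDist
  split_ifs at h <;> omega

variable [NeZero q]

theorem multAqq_add_multAqq_swap (v w : Fin (q + q)) :
    multAqq q w v + multAqq q v w =
      (if v - 1 = w then 1 else 0) + (if v + 1 = w then 1 else 0) := by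
  have hq := NeZero.pos q
  have hv := v.isLt
  have hw := w.isLt
  simp only [sub_eq_iff_eq_add, Fin.ext_iff, fin_val_add_one_eq_ite, multAqq]
  split_ifs <;> omega

theorem sourceDist_add_one (v : Fin (q + q)) :
    sourceDist (v + 1) = sourceDist v + 1 ∨ sourceDist v = sourceDist (v + 1) + 1 := by
  simp only [sourceDist, fin_val_add_one_eq_ite]
  split_ifs <;> omega

theorem exists_succ_eq_sourceDist_add_one {v : Fin (q + q)} {n : ℕ}
    (h : ∃ j, n = sourceDist v + 2 * j) : ∃ j, n + 1 = sourceDist (v + 1) + 2 * j := by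
  obtain ⟨j, hj⟩ := h
  rcases sourceDist_add_one v with hv | hv
  · exact ⟨j, by omega⟩
  · exact ⟨j + 1, by omega⟩

theorem exists_succ_eq_sourceDist_sub_one {v : Fin (q + q)} {n : ℕ}
    (h : ∃ j, n = sourceDist v + 2 * j) : ∃ j, n + 1 = sourceDist (v - 1) + 2 * j := by
  obtain ⟨j, hj⟩ := h
  have hv := sourceDist_add_one (v - 1)
  rw [sub_add_cancel] at hv
  rcases hv with hv | hv
  · exact ⟨j + 1, by omega⟩
  · exact ⟨j, by omega⟩

variable (q) in
/-- The vertex in the entry `(a, b)` of the tiling: a step in `b` moves to the next vertex of the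
cycle, a step in `a` to the previous one, and the source `q` is on the diagonal. -/
def coverVertex (a b : ℕ) : Fin (q + q) :=
  q + b - a

theorem coverVertex_succ_left (a b : ℕ) : coverVertex q (a + 1) b = coverVertex q a b - 1 := by
  rw [coverVertex, coverVertex, Nat.cast_succ, sub_sub]

theorem coverVertex_succ_right (a b : ℕ) : coverVertex q a (b + 1) = coverVertex q a b + 1 := by
  rw [coverVertex, coverVertex, Nat.cast_succ, ← add_assoc, add_sub_right_comm]

theorem coverVertex_add_left (a b : ℕ) : coverVertex q (a + q) b = coverVertex q a (b + q) := by
  have period : (q + q : Fin (q + q)) = 0 := by rw [← Nat.cast_add, Fin.natCast_self]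
  simp only [coverVertex, Nat.cast_add]
  linear_combination -period

theorem coverVertex_diagonal (v : Fin (q + q)) (j : ℕ) :
    coverVertex q (q - v + j) (v - q + j) = v := by
  have h : ((q + (v - q) : ℕ) : Fin (q + q)) = (v + (q - v) : ℕ) := by
    congr 1
    omega
  simp only [coverVertex, Nat.cast_add, Fin.cast_val_eq_self] at h ⊢
  linear_combination h

theorem exists_add_eq_sourceDist_coverVertex (a b : ℕ) :
    ∃ j, a + b = sourceDist (coverVertex q a b) + 2 * j := by
  induction a with
  | zero =>
    induction b with
    | zero =>
      have hq := NeZero.pos q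
      refine ⟨0, ?_⟩
      simp [coverVertex, sourceDist, Fin.val_natCast, Nat.mod_eq_of_lt (show q < q + q by omega)]
    | succ b ih =>
      rw [coverVertex_succ_right, ← add_assoc]
      exact exists_succ_eq_sourceDist_add_one ih
  | succ a ih =>
    rw [coverVertex_succ_left, add_right_comm]
    exact exists_succ_eq_sourceDist_sub_one ih

/-- The frieze `X` as an array on the quadrant: the entry `(a, b)` is the value at time `a + b` of
the vertex `coverVertex q a b`. -/
def friezeTiling {R : Type*} (X : Fin (q + q) → ℕ → R) (a b : ℕ) : R :=
  friezeAtTime sourceDist X (coverVertex q a b) (a + b)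

theorem friezeTiling_ne_zero {R : Type*} [Zero R] {X : Fin (q + q) → ℕ → R} (h0 : ∀ v j, X v j ≠ 0)
    (a b : ℕ) : friezeTiling X a b ≠ 0 :=
  h0 _ _

theorem friezeTiling_periodic {R : Type*} (X : Fin (q + q) → ℕ → R) (a b : ℕ) :
    friezeTiling X (a + q) b = friezeTiling X a (b + q) := by
  rw [friezeTiling, friezeTiling, coverVertex_add_left, add_right_comm, add_assoc]

theorem friezeTiling_diagonal {R : Type*} (X : Fin (q + q) → ℕ → R) (v : Fin (q + q)) (j : ℕ) :
    friezeTiling X (q - v + j) (v - q + j) = X v j := by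
  rw [friezeTiling, coverVertex_diagonal]
  exact friezeAtTime_of_eq X (by rw [sourceDist]; omega)

theorem IsFrieze.isSL2Tiling {R : Type*} [CommSemiring R] {X : Fin (q + q) → ℕ → R}
    (hX : IsFrieze (multAqq q) X) : IsSL2Tiling (friezeTiling X) := by
  intro a b
  obtain ⟨j, hj⟩ := exists_add_eq_sourceDist_coverVertex (q := q) a b
  have mesh := hX.friezeAtTime_mul (isGrading_sourceDist q) hj
  simp only [multAqq_add_multAqq_swap, pow_add, Finset.prod_mul_distrib, Finset.prod_pow_boole,
    Finset.mem_univ, if_true] at mesh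
  simp only [friezeTiling, coverVertex_succ_left, coverVertex_succ_right, add_sub_cancel_right]
  rwa [show a + 1 + (b + 1) = a + b + 2 by ring, add_right_comm a 1 b, ← add_assoc a b 1]

end Aqq

theorem stmt_18_general {K : Type*} [Field K] {q : ℕ} (hq : 1 ≤ q) {X : Fin (q + q) → ℕ → K}
    (hX : IsFrieze (multAqq q) X) (h0 : ∀ v j, X v j ≠ 0) :
    ∃ Y : K, ∀ (i : Fin (q + q)) (j : ℕ),
      (Y ^ 2 - 2) * X i (j + q) = X i j + X i (j + 2 * q) := by
  have : NeZero q := ⟨by omega⟩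
  obtain ⟨Y, hY⟩ := hX.isSL2Tiling.exists_diagonal_recurrence_of_periodic
    (friezeTiling_ne_zero h0) (friezeTiling_periodic X)
  refine ⟨Y, fun i j => ?_⟩
  simpa only [add_assoc, friezeTiling_diagonal] using hY (q - i + j) (i - q + j)

/-- for `q ≥ 1` and the above quiver of type Ã_{q,q}, there is an element
`Y` of `ℚ(x_0,…,x_{2q−1})` such that for every vertex `i` and every `j ≥ 0` one has
`(Y² − 2)·X^i_{j+q} = X^i_j + X^i_{j+2q}`. -/
theorem stmt_18 (q : ℕ) (hq : 1 ≤ q)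
    (X : Fin (q+q) → ℕ → FractionRing (MvPolynomial (Fin (q+q)) ℚ))
    (hX0 : ∀ v, X v 0 = algebraMap (MvPolynomial (Fin (q+q)) ℚ)
      (FractionRing (MvPolynomial (Fin (q+q)) ℚ)) (MvPolynomial.X v))
    (hXrec : ∀ v (j : ℕ), X v (j+1) * X v j =
      1 + (∏ s : Fin (q+q), X s (j+1) ^ multAqq q s v) *
          (∏ d : Fin (q+q), X d j ^ multAqq q v d)) :
    ∃ Y : FractionRing (MvPolynomial (Fin (q+q)) ℚ),
      ∀ (i : Fin (q+q)) (j : ℕ),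
        (Y ^ 2 - 2) * X i (j + q) = X i j + X i (j + 2 * q) :=
  stmt_18_general hq hXrec
    (IsFrieze.ne_zero_of_initial_eq_X hXrec (isGrading_sourceDist q).wellFounded hX0)
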